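/- Let n ≥ 2, let c, x ∈ ℝⁿ and r, p > 0 with |c − x| = p + r + δ for some δ > 0, let k ≥ max(|c|, |x|) > 0, let 𝔴 be uniformly distributed on the unit sphere S^{n−1} ⊂ ℝⁿ, let 𝔟 be independently uniformly distributed on [−k, k], and set 𝒬 = 1 − ((p+r)/(p+r+δ))². Then the probability that H[𝔴;𝔟] separates B[c,r] and B[x,p] equals (|c − x|/(2k)) · ( 𝒬^{(n−1)/2} / ( ((n−1)/2) · B((n−1)/2, 1/2) ) − ((p+r)/(p+r+δ)) · I(𝒬; (n−1)/2, 1/2) ). -/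

import Mathlib

open MeasureTheory Metric Real
open scoped RealInnerProductSpace

/-- `H[w;b]` separates `B[c,r]` and `B[x,p]`: the linear functional `u ↦ ⟪w,u⟫ - b`
is positive on one open ball and negative on the other. -/
def Separates {n : ℕ} (w : EuclideanSpace ℝ (Fin n)) (b : ℝ)
    (c : EuclideanSpace ℝ (Fin n)) (r : ℝ)
    (x : EuclideanSpace ℝ (Fin n)) (p : ℝ) : Prop :=
  ((∀ u ∈ ball c r, 0 < ⟪w, u⟫ - b) ∧ (∀ u ∈ ball x p, ⟪w, u⟫ - b < 0)) ∨
  ((∀ u ∈ ball c r, ⟪w, u⟫ - b < 0) ∧ (∀ u ∈ ball x p, 0 < ⟪w, u⟫ - b))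

/-- The Beta function `B(y,z) = Γ(y)Γ(z)/Γ(y+z)`. -/
noncomputable def realBeta (y z : ℝ) : ℝ := Gamma y * Gamma z / Gamma (y + z)

/-- The regularized incomplete beta function `I(κ; y, z)`. -/
noncomputable def regIncBeta (κ y z : ℝ) : ℝ :=
  (∫ s in (0:ℝ)..κ, s ^ (y - 1) * (1 - s) ^ (z - 1)) / realBeta y z

/-- The uniform (rotation-invariant, normalized surface) probability measure on
the unit sphere of `ℝⁿ`. -/
noncomputable def uniformSphere (n : ℕ) :
    Measure (Metric.sphere (0 : EuclideanSpace ℝ (Fin n)) 1) :=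
  ((volume : Measure (EuclideanSpace ℝ (Fin n))).toSphere Set.univ)⁻¹ •
    (volume : Measure (EuclideanSpace ℝ (Fin n))).toSphere

/-!
A unit normal `w` fixes the set of admissible offsets `b`: it is the gap between the projections of
the two balls to the line `ℝ w`, an interval of length `(|⟪w, c - x⟫| - (p + r))⁺`, and it lies in
`[-k, k]` because the projections of both centres do. The probability is therefore a spherical
average of a function of `⟪c - x, w⟫`. In spherical coordinates about `c - x`, whose polar angle `θ`
has density `sin θ ^ (n - 2) / B((n - 1) / 2, 1 / 2)` on `(0, π)`, it becomes an integral over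
`cos θ ≥ a := (p + r) / (p + r + δ)`: the part with `cos θ` is elementary, and `s = sin θ ^ 2` turns
the part with `a` into an incomplete beta integral.
-/

section PolarCoordinates

variable {E : Type*} [NormedAddCommGroup E] [NormedSpace ℝ E] [MeasurableSpace E] [BorelSpace E]
  [FiniteDimensional ℝ E] [Nontrivial E] (μ : Measure E) [μ.IsAddHaarMeasure]

theorem lintegral_eq_lintegral_toSphere {F : E → ENNReal} (hF : Measurable F) :
    ∫⁻ y, F y ∂μ = ∫⁻ w : sphere (0 : E) 1, (∫⁻ t in Set.Ioi (0 : ℝ),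
      ENNReal.ofReal (t ^ (Module.finrank ℝ E - 1)) * F (t • (w : E))) ∂μ.toSphere := by
  calc
    ∫⁻ y, F y ∂μ = ∫⁻ y : ({0}ᶜ : Set E), F y ∂(μ.comap (↑)) := by
      rw [lintegral_subtype_comap (measurableSet_singleton _).compl F, restrict_compl_singleton]
    _ = ∫⁻ q, F (q.2.1 • q.1.1) ∂μ.toSphere.prod (.volumeIoiPow (Module.finrank ℝ E - 1)) := by
      rw [← μ.measurePreserving_homeomorphUnitSphereProd.lintegral_comp_emb
        (Homeomorph.measurableEmbedding _)]
      refine lintegral_congr fun y => ?_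
      have hy : ‖y.1‖ ≠ 0 := norm_ne_zero_iff.2 y.2
      simp [smul_smul, hy]
    _ = _ := by
      rw [lintegral_prod _ (by fun_prop)]
      refine lintegral_congr fun w => ?_
      rw [Measure.volumeIoiPow,
        lintegral_withDensity_eq_lintegral_mul _ (by fun_prop) (by fun_prop),
        ← lintegral_subtype_comap measurableSet_Ioi]
      rfl

theorem lintegral_comp_norm_eq_toSphere_univ_mul {F : ℝ → ENNReal} (hF : Measurable F) :
    ∫⁻ y, F ‖y‖ ∂μ = μ.toSphere Set.univ * ∫⁻ t in Set.Ioi (0 : ℝ),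
      ENNReal.ofReal (t ^ (Module.finrank ℝ E - 1)) * F t := by
  rw [lintegral_eq_lintegral_toSphere μ (by fun_prop), mul_comm, ← lintegral_const]
  refine lintegral_congr fun w => setLIntegral_congr_fun measurableSet_Ioi fun t ht => ?_
  simp [norm_smul, abs_of_pos (Set.mem_Ioi.1 ht)]

end PolarCoordinates

theorem polarCoord_symm_preimage_upperHalfPlane_inter_target :
    polarCoord.symm ⁻¹' {q : ℝ × ℝ | 0 < q.2} ∩ polarCoord.target =
      (Set.Ioi 0 ×ˢ Set.Ioo 0 π : Set (ℝ × ℝ)) := by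
  ext ⟨t, θ⟩
  simp only [polarCoord_target, polarCoord_symm_apply, Set.mem_inter_iff, Set.mem_preimage,
    Set.mem_ofPred_eq, Set.mem_prod, Set.mem_Ioi, Set.mem_Ioo]
  constructor
  · rintro ⟨hsin, ht, hθ⟩
    refine ⟨ht, ?_, hθ.2⟩
    by_contra! hθ0
    exact (mul_nonpos_of_nonneg_of_nonpos ht.le
      (sin_nonpos_of_nonpos_of_neg_pi_le hθ0 hθ.1.le)).not_gt hsin
  · rintro ⟨ht, hθ⟩
    exact ⟨mul_pos ht (sin_pos_of_pos_of_lt_pi hθ.1 hθ.2), ht, by linarith [pi_pos], hθ.2⟩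

theorem lintegral_upperHalfPlane_eq_polar {g : ℝ × ℝ → ENNReal} (hg : Measurable g) :
    ∫⁻ s : ℝ, ∫⁻ ρ in Set.Ioi (0 : ℝ), g (s, ρ) =
      ∫⁻ t in Set.Ioi (0 : ℝ), ∫⁻ θ in Set.Ioo 0 π,
        ENNReal.ofReal t * g (t * cos θ, t * sin θ) := by
  have hupper : MeasurableSet {q : ℝ × ℝ | 0 < q.2} := measurableSet_lt (by fun_prop) (by fun_prop)
  have hpolar : Measurable polarCoord.symm := continuous_polarCoord_symm.measurable
  calc
    ∫⁻ s : ℝ, ∫⁻ ρ in Set.Ioi (0 : ℝ), g (s, ρ)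
      = ∫⁻ q : ℝ × ℝ, {q : ℝ × ℝ | 0 < q.2}.indicator g q := by
      rw [Measure.volume_eq_prod, lintegral_prod _ (hg.indicator hupper).aemeasurable]
      refine lintegral_congr fun s => ?_
      rw [← lintegral_indicator measurableSet_Ioi]
      rfl
    _ = ∫⁻ q in polarCoord.target, (polarCoord.symm ⁻¹' {q | 0 < q.2}).indicator
          (fun q => ENNReal.ofReal q.1 * g (polarCoord.symm q)) q := by
      rw [← lintegral_comp_polarCoord_symm]
      refine lintegral_congr fun q => ?_
      simp [Set.indicator]
    _ = ∫⁻ q in Set.Ioi 0 ×ˢ Set.Ioo 0 π, ENNReal.ofReal q.1 * g (polarCoord.symm q) := by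
      rw [setLIntegral_indicator (hpolar hupper),
        polarCoord_symm_preimage_upperHalfPlane_inter_target]
    _ = _ := by
      rw [Measure.volume_eq_prod, ← Measure.prod_restrict, lintegral_prod _ (by fun_prop)]
      simp only [polarCoord_symm_apply]

theorem lintegral_Ioi_pow_mul_exp_neg (n : ℕ) :
    ∫⁻ t in Set.Ioi (0 : ℝ), ENNReal.ofReal (t ^ n) * ENNReal.ofReal (exp (-t)) =
      (n.factorial : ENNReal) := by
  have hint := GammaIntegral_convergent (show (0 : ℝ) < n + 1 by positivity)
  rw [← ENNReal.ofReal_natCast, ← Gamma_nat_eq_factorial, Gamma_eq_integral (by positivity),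
    ofReal_integral_eq_lintegral_ofReal hint]
  · refine setLIntegral_congr_fun measurableSet_Ioi fun t _ => ?_
    simp only [add_sub_cancel_right, rpow_natCast]
    rw [mul_comm, ENNReal.ofReal_mul (exp_pos _).le]
  · filter_upwards [ae_restrict_mem measurableSet_Ioi] with t ht
    have ht : 0 < t := ht
    positivity

section SphericalCoordinates

variable {E : Type*} [NormedAddCommGroup E] [InnerProductSpace ℝ E] [MeasurableSpace E]
  [BorelSpace E] [FiniteDimensional ℝ E]

theorem lintegral_eq_lintegral_span_orthogonal {v : E} (hv : ‖v‖ = 1) {F : E → ENNReal}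
    (hF : Measurable F) :
    ∫⁻ y, F y = ∫⁻ s : ℝ, ∫⁻ z : (ℝ ∙ v)ᗮ, F (s • v + (z : E)) := by
  let split := (ℝ ∙ v).orthogonalDecomposition
  let line := LinearIsometryEquiv.toSpanUnitSingleton (𝕜 := ℝ) v hv
  rw [← split.symm.measurePreserving.lintegral_comp_emb
      split.symm.toHomeomorph.measurableEmbedding,
    ← (WithLp.volume_preserving_toLp _ _).lintegral_comp_emb
      (MeasurableEquiv.toLp 2 _).measurableEmbedding,
    Measure.volume_eq_prod, lintegral_prod _ (by fun_prop),
    ← line.measurePreserving.lintegral_comp_emb line.toHomeomorph.measurableEmbedding]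
  simp [split, line]

theorem lintegral_comp_inner_norm_eq_cylindrical {n : ℕ} (hn : Module.finrank ℝ E = n + 2) {v : E}
    (hv : ‖v‖ = 1) {G : ℝ × ℝ → ENNReal} (hG : Measurable G) :
    ∫⁻ y : E, G (⟪v, y⟫, ‖y‖) =
      (volume : Measure (ℝ ∙ v)ᗮ).toSphere Set.univ * ∫⁻ s : ℝ, ∫⁻ ρ in Set.Ioi (0 : ℝ),
        ENNReal.ofReal (ρ ^ n) * G (s, √(s ^ 2 + ρ ^ 2)) := by
  have : Fact (Module.finrank ℝ E = n + 1 + 1) := ⟨hn⟩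
  have hdim : Module.finrank ℝ (ℝ ∙ v)ᗮ = n + 1 :=
    Submodule.finrank_orthogonal_span_singleton (norm_ne_zero_iff.1 (hv ▸ one_ne_zero))
  have : Nontrivial (ℝ ∙ v)ᗮ := Module.nontrivial_of_finrank_pos (R := ℝ) (by omega)
  have hcoord (s : ℝ) (z : (ℝ ∙ v)ᗮ) :
      ⟪v, s • v + (z : E)⟫ = s ∧ ‖s • v + (z : E)‖ = √(s ^ 2 + ‖z‖ ^ 2) := by
    have hz : ⟪v, (z : E)⟫ = 0 := Submodule.mem_orthogonal_singleton_iff_inner_right.1 z.2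
    constructor
    · simp [inner_add_right, inner_smul_right, hv, hz]
    · rw [eq_comm, sqrt_eq_iff_mul_self_eq (by positivity) (by positivity),
        norm_add_mul_self_real]
      simp [inner_smul_left, hz, norm_smul, hv, sq]
  rw [lintegral_eq_lintegral_span_orthogonal hv (by fun_prop),
    ← lintegral_const_mul _ (by fun_prop)]
  refine lintegral_congr fun s => ?_
  simp only [hcoord]
  rw [lintegral_comp_norm_eq_toSphere_univ_mul volume
    (F := fun ρ => G (s, √(s ^ 2 + ρ ^ 2))) (by fun_prop), hdim, Nat.add_sub_cancel]

theorem lintegral_comp_inner_norm_eq_spherical {n : ℕ} (hn : Module.finrank ℝ E = n + 2) {v : E}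
    (hv : ‖v‖ = 1) {G : ℝ × ℝ → ENNReal} (hG : Measurable G) :
    ∫⁻ y : E, G (⟪v, y⟫, ‖y‖) =
      (volume : Measure (ℝ ∙ v)ᗮ).toSphere Set.univ *
        ∫⁻ t in Set.Ioi (0 : ℝ), ∫⁻ θ in Set.Ioo 0 π,
          ENNReal.ofReal (t ^ (n + 1)) * (ENNReal.ofReal (sin θ ^ n) * G (t * cos θ, t)) := by
  rw [lintegral_comp_inner_norm_eq_cylindrical hn hv hG,
    lintegral_upperHalfPlane_eq_polar
      (g := fun q => ENNReal.ofReal (q.2 ^ n) * G (q.1, √(q.1 ^ 2 + q.2 ^ 2))) (by fun_prop)]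
  congr 1
  refine setLIntegral_congr_fun measurableSet_Ioi fun t ht => ?_
  have ht : 0 < t := ht
  refine setLIntegral_congr_fun measurableSet_Ioo fun θ _ => ?_
  have hnorm : √((t * cos θ) ^ 2 + (t * sin θ) ^ 2) = t := by
    rw [mul_pow, mul_pow, ← mul_add, cos_sq_add_sin_sq, mul_one, sqrt_sq ht.le]
  simp only [hnorm]
  rw [mul_pow, ENNReal.ofReal_mul (by positivity), pow_succ', ENNReal.ofReal_mul ht.le]
  ring

theorem lintegral_toSphere_comp_inner {n : ℕ} (hn : Module.finrank ℝ E = n + 2) {v : E}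
    (hv : ‖v‖ = 1) {f : ℝ → ENNReal} (hf : Measurable f) :
    ∫⁻ w : sphere (0 : E) 1, f ⟪v, (w : E)⟫ ∂(volume : Measure E).toSphere =
      (volume : Measure (ℝ ∙ v)ᗮ).toSphere Set.univ *
        ∫⁻ θ in Set.Ioo 0 π, ENNReal.ofReal (sin θ ^ n) * f (cos θ) := by
  have : Nontrivial E := Module.nontrivial_of_finrank_pos (R := ℝ) (by omega)
  -- Multiplied by the radial mass `∫⁻ t ^ (n + 1) * exp (-t)`, the two sides become the polar and
  -- the spherical form of one integral over `E`.
  let G : ℝ × ℝ → ENNReal := fun q => f (q.1 / q.2) * ENNReal.ofReal (exp (-q.2))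
  have hG : Measurable G := by fun_prop
  have hpolar : ∫⁻ y : E, G (⟪v, y⟫, ‖y‖) = (n + 1).factorial *
      ∫⁻ w : sphere (0 : E) 1, f ⟪v, (w : E)⟫ ∂(volume : Measure E).toSphere := by
    rw [lintegral_eq_lintegral_toSphere volume (by fun_prop), ← lintegral_const_mul _ (by fun_prop)]
    refine lintegral_congr fun w => ?_
    rw [← lintegral_Ioi_pow_mul_exp_neg, ← lintegral_mul_const _ (by fun_prop), hn]
    refine setLIntegral_congr_fun measurableSet_Ioi fun t ht => ?_
    have ht : 0 < t := ht
    have hnorm : ‖t • (w : E)‖ = t := by simp [norm_smul, ht.le]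
    simp only [G, hnorm, inner_smul_right, mul_div_cancel_left₀ _ ht.ne', Nat.add_succ_sub_one]
    ring
  have hspherical : ∫⁻ y : E, G (⟪v, y⟫, ‖y‖) = (n + 1).factorial *
      ((volume : Measure (ℝ ∙ v)ᗮ).toSphere Set.univ *
        ∫⁻ θ in Set.Ioo 0 π, ENNReal.ofReal (sin θ ^ n) * f (cos θ)) := by
    rw [lintegral_comp_inner_norm_eq_spherical hn hv hG, mul_left_comm,
      ← lintegral_Ioi_pow_mul_exp_neg, ← lintegral_mul_const _ (by fun_prop)]
    congr 1
    refine setLIntegral_congr_fun measurableSet_Ioi fun t ht => ?_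
    have ht : 0 < t := ht
    simp only [G, mul_div_cancel_left₀ _ ht.ne']
    rw [← lintegral_const_mul _ (by fun_prop)]
    exact lintegral_congr fun θ => by ring
  exact (ENNReal.mul_right_inj (by simp [Nat.factorial_ne_zero]) (by simp)).1
    (hpolar.symm.trans hspherical)

theorem toSphere_volume_univ [Nontrivial E] :
    (volume : Measure E).toSphere Set.univ = ENNReal.ofReal
      (2 * √π ^ Module.finrank ℝ E / Gamma (Module.finrank ℝ E / 2)) := by
  have hdim : (0 : ℝ) < Module.finrank ℝ E := mod_cast Module.finrank_pos
  have hGamma : Gamma ((Module.finrank ℝ E : ℝ) / 2) ≠ 0 := (Gamma_pos_of_pos (by positivity)).ne'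
  rw [Measure.toSphere_apply_univ, InnerProductSpace.volume_ball, ENNReal.ofReal_one, one_pow,
    one_mul, ← ENNReal.ofReal_natCast, ← ENNReal.ofReal_mul (by positivity),
    Gamma_add_one (by positivity)]
  congr 1
  field_simp

end SphericalCoordinates

theorem realBeta_pos {y z : ℝ} (hy : 0 < y) (hz : 0 < z) : 0 < realBeta y z :=
  ProbabilityTheory.beta_pos hy hz

theorem toSphere_univ_inv_mul_toSphere_univ {E F : Type*} [NormedAddCommGroup E]
    [InnerProductSpace ℝ E] [MeasurableSpace E] [BorelSpace E] [FiniteDimensional ℝ E]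
    [NormedAddCommGroup F] [InnerProductSpace ℝ F] [MeasurableSpace F] [BorelSpace F]
    [FiniteDimensional ℝ F] [Nontrivial F]
    (h : Module.finrank ℝ E = Module.finrank ℝ F + 1) :
    ((volume : Measure E).toSphere Set.univ)⁻¹ * (volume : Measure F).toSphere Set.univ =
      ENNReal.ofReal (realBeta (Module.finrank ℝ F / 2) (1 / 2))⁻¹ := by
  have : Nontrivial E := Module.nontrivial_of_finrank_pos (R := ℝ) (by omega)
  have hdim : (0 : ℝ) < Module.finrank ℝ F := mod_cast Module.finrank_pos
  rw [toSphere_volume_univ, toSphere_volume_univ, h, Nat.cast_add_one, add_div,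
    ← ENNReal.ofReal_inv_of_pos (by positivity), ← ENNReal.ofReal_mul (by positivity), realBeta,
    Gamma_one_half_eq, pow_succ]
  congr 1
  field_simp

theorem lintegral_uniformSphere_comp_inner {m : ℕ} {v : EuclideanSpace ℝ (Fin (m + 2))}
    (hv : ‖v‖ = 1) {f : ℝ → ENNReal} (hf : Measurable f) :
    ∫⁻ w, f ⟪v, (w : EuclideanSpace ℝ (Fin (m + 2)))⟫ ∂uniformSphere (m + 2) =
      ENNReal.ofReal (realBeta (((m : ℝ) + 1) / 2) (1 / 2))⁻¹ *
        ∫⁻ θ in Set.Ioo 0 π, ENNReal.ofReal (sin θ ^ m) * f (cos θ) := by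
  have hE : Module.finrank ℝ (EuclideanSpace ℝ (Fin (m + 2))) = m + 2 := by simp
  have : Fact (Module.finrank ℝ (EuclideanSpace ℝ (Fin (m + 2))) = m + 1 + 1) := ⟨hE⟩
  have hdim : Module.finrank ℝ (ℝ ∙ v)ᗮ = m + 1 :=
    Submodule.finrank_orthogonal_span_singleton (norm_ne_zero_iff.1 (hv ▸ one_ne_zero))
  have : Nontrivial (ℝ ∙ v)ᗮ := Module.nontrivial_of_finrank_pos (R := ℝ) (by omega)
  rw [uniformSphere, lintegral_smul_measure, lintegral_toSphere_comp_inner hE hv hf, smul_eq_mul,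
    ← mul_assoc, toSphere_univ_inv_mul_toSphere_univ (by rw [hE, hdim]), hdim, Nat.cast_add_one]

theorem integral_eq_two_mul_integral_half_of_symm {f : ℝ → ℝ} {b : ℝ}
    (hf : ∀ x, f (b - x) = f x) (hint : IntervalIntegrable f volume 0 b) :
    ∫ x in 0..b, f x = 2 * ∫ x in 0..b / 2, f x := by
  have hmid : b / 2 ∈ Set.uIcc 0 b := by
    rcases le_total 0 b with hb | hb
    · exact Set.mem_uIcc_of_le (by linarith) (by linarith)
    · exact Set.mem_uIcc_of_ge (by linarith) (by linarith)
  have hleft := hint.mono_set (Set.uIcc_subset_uIcc Set.left_mem_uIcc hmid)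
  have hright := hint.mono_set (Set.uIcc_subset_uIcc hmid Set.right_mem_uIcc)
  have hreflect : ∫ x in b / 2..b, f x = ∫ x in 0..b / 2, f x := by
    have := intervalIntegral.integral_comp_sub_left (a := 0) (b := b / 2) f b
    rw [sub_zero, sub_half] at this
    simpa only [hf] using this.symm
  rw [← intervalIntegral.integral_add_adjacent_intervals hleft hright, hreflect, two_mul]

theorem integral_incBeta_sin_sq (y z : ℝ) {α : ℝ} (hα0 : 0 ≤ α) (hα : α ≤ π / 2) :
    ∫ s in 0..sin α ^ 2, s ^ (y - 1) * (1 - s) ^ (z - 1) =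
      2 * ∫ θ in 0..α, sin θ ^ (2 * y - 1) * cos θ ^ (2 * z - 1) := by
  have hpos : ∀ θ ∈ Set.Ioo 0 α, 0 < sin θ ∧ 0 < cos θ := fun θ hθ =>
    ⟨sin_pos_of_pos_of_lt_pi hθ.1 (by linarith [hθ.2, pi_pos]),
      cos_pos_of_mem_Ioo ⟨by linarith [hθ.1, pi_pos], by linarith [hθ.2]⟩⟩
  have hsubst := intervalIntegral.integral_deriv_smul_comp_of_deriv_nonneg (a := 0) (b := α)
    (f := fun θ => sin θ ^ 2) (f' := fun θ => 2 * sin θ * cos θ)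
    (g := fun s => s ^ (y - 1) * (1 - s) ^ (z - 1)) (by fun_prop)
    (fun θ _ => by simpa using! (hasDerivAt_sin θ).pow 2)
    (fun θ hθ => by
      rw [min_eq_left hα0, max_eq_right hα0] at hθ
      have := hpos θ hθ
      exact mul_nonneg (by linarith) (by linarith))
  rw [sin_zero, zero_pow two_ne_zero] at hsubst
  rw [← hsubst, ← intervalIntegral.integral_const_mul]
  refine intervalIntegral.integral_congr_Ioo_of_le hα0 fun θ hθ => ?_
  obtain ⟨hsin, hcos⟩ := hpos θ hθ
  have hdouble {u : ℝ} (hu : 0 < u) (e : ℝ) : u * (u ^ 2) ^ (e - 1) = u ^ (2 * e - 1) := by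
    rw [show 2 * e - 1 = (2 : ℕ) * (e - 1) + 1 by push_cast; ring, rpow_add_one hu.ne',
      rpow_natCast_mul hu.le, mul_comm]
  simp only [smul_eq_mul, Function.comp_apply, ← cos_sq', ← hdouble hsin, ← hdouble hcos]
  ring

theorem integral_mul_posPart_abs_cos_sub {g : ℝ → ℝ} (hg : Continuous g) {a : ℝ} (ha0 : 0 ≤ a)
    (ha1 : a ≤ 1) :
    ∫ θ in 0..π / 2, g θ * max (|cos θ| - a) 0 =
      ∫ θ in 0..arccos a, g θ * (cos θ - a) := by
  have hα : arccos a ≤ π / 2 := arccos_le_pi_div_two.2 ha0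
  have hcos : cos (arccos a) = a := cos_arccos (by linarith) ha1
  have hint : ∀ u v : ℝ,
      IntervalIntegrable (fun θ => g θ * max (|cos θ| - a) 0) volume u v :=
    fun u v => Continuous.intervalIntegrable (by fun_prop) u v
  have hinside : ∫ θ in 0..arccos a, g θ * max (|cos θ| - a) 0 =
      ∫ θ in 0..arccos a, g θ * (cos θ - a) := by
    refine intervalIntegral.integral_congr fun θ hθ => ?_
    rw [Set.uIcc_of_le (arccos_nonneg a)] at hθ
    have hle : a ≤ cos θ :=
      hcos.ge.trans (cos_le_cos_of_nonneg_of_le_pi hθ.1 (arccos_le_pi a) hθ.2)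
    simp only [abs_of_nonneg (ha0.trans hle), max_eq_left (sub_nonneg.2 hle)]
  have houtside : ∫ θ in arccos a..π / 2, g θ * max (|cos θ| - a) 0 = 0 := by
    refine intervalIntegral.integral_zero_ae (.of_forall fun θ hθ => ?_)
    rw [Set.uIoc_of_le hα] at hθ
    have hle : cos θ ≤ a :=
      (cos_le_cos_of_nonneg_of_le_pi (arccos_nonneg a) (by linarith [hθ.2, pi_pos])
        hθ.1.le).trans hcos.le
    have hnonneg : 0 ≤ cos θ :=
      cos_nonneg_of_mem_Icc ⟨by linarith [hθ.1, arccos_nonneg a, pi_pos], hθ.2⟩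
    simp [abs_of_nonneg hnonneg, hle]
  rw [← intervalIntegral.integral_add_adjacent_intervals (hint 0 (arccos a))
    (hint (arccos a) (π / 2)), hinside, houtside, add_zero]

theorem integral_sin_pow_mul_posPart_abs_cos_sub (m : ℕ) {a : ℝ} (ha0 : 0 ≤ a) (ha1 : a ≤ 1) :
    ∫ θ in 0..π, sin θ ^ m * max (|cos θ| - a) 0 =
      (1 - a ^ 2) ^ (((m : ℝ) + 1) / 2) / (((m : ℝ) + 1) / 2) -
        a * ∫ s in 0..1 - a ^ 2, s ^ (((m : ℝ) + 1) / 2 - 1) * (1 - s) ^ ((1 / 2 : ℝ) - 1) := by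
  have hQ : 0 ≤ 1 - a ^ 2 := by nlinarith
  have hsin : sin (arccos a) ^ 2 = 1 - a ^ 2 := by rw [sin_arccos, sq_sqrt hQ]
  have hbeta : ∫ s in 0..1 - a ^ 2, s ^ (((m : ℝ) + 1) / 2 - 1) * (1 - s) ^ ((1 / 2 : ℝ) - 1) =
      2 * ∫ θ in 0..arccos a, sin θ ^ m := by
    rw [← hsin, integral_incBeta_sin_sq _ _ (arccos_nonneg a) (arccos_le_pi_div_two.2 ha0),
      mul_div_cancel₀ _ two_ne_zero, mul_div_cancel₀ _ two_ne_zero, add_sub_cancel_right, sub_self]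
    simp only [rpow_natCast, rpow_zero, mul_one]
  have hcos : ∫ θ in 0..arccos a, sin θ ^ m * cos θ =
      (1 - a ^ 2) ^ (((m : ℝ) + 1) / 2) / (m + 1) := by
    have := integral_sin_pow_mul_cos_pow_odd (a := 0) (b := arccos a) m 0
    simp only [mul_zero, zero_add, pow_one, pow_zero, mul_one, integral_pow, sin_zero] at this
    rw [this, sin_arccos, sqrt_eq_rpow, ← rpow_mul_natCast hQ]
    simp [inv_mul_eq_div]
  have hint {g : ℝ → ℝ} (hg : Continuous g) (u v : ℝ) : IntervalIntegrable g volume u v :=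
    hg.intervalIntegrable u v
  rw [integral_eq_two_mul_integral_half_of_symm (by simp [sin_pi_sub, cos_pi_sub])
      (hint (by fun_prop) _ _), integral_mul_posPart_abs_cos_sub (by fun_prop) ha0 ha1,
    hbeta]
  simp only [mul_sub]
  rw [intervalIntegral.integral_sub (hint (by fun_prop) _ _) (hint (by fun_prop) _ _), hcos,
    intervalIntegral.integral_mul_const]
  field_simp

theorem lintegral_sin_pow_mul_abs_cos_sub (m : ℕ) {a : ℝ} (ha0 : 0 ≤ a) (ha1 : a ≤ 1) :
    ∫⁻ θ in Set.Ioo 0 π, ENNReal.ofReal (sin θ ^ m) * ENNReal.ofReal (|cos θ| - a) =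
      ENNReal.ofReal ((1 - a ^ 2) ^ (((m : ℝ) + 1) / 2) / (((m : ℝ) + 1) / 2) -
        a * ∫ s in 0..1 - a ^ 2, s ^ (((m : ℝ) + 1) / 2 - 1) * (1 - s) ^ ((1 / 2 : ℝ) - 1)) := by
  rw [← integral_sin_pow_mul_posPart_abs_cos_sub m ha0 ha1,
    intervalIntegral.integral_of_le pi_pos.le, integral_Ioc_eq_integral_Ioo,
    ofReal_integral_eq_lintegral_ofReal]
  · refine setLIntegral_congr_fun measurableSet_Ioo fun θ hθ => ?_
    have hsin := (sin_pos_of_pos_of_lt_pi hθ.1 hθ.2).le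
    rw [ENNReal.ofReal_mul (by positivity), ENNReal.ofReal_max, ENNReal.ofReal_zero,
      max_eq_left zero_le]
  · exact (Continuous.integrableOn_Icc (by fun_prop)).mono_set Set.Ioo_subset_Icc_self
  · filter_upwards [ae_restrict_mem measurableSet_Ioo] with θ hθ
    have hsin := (sin_pos_of_pos_of_lt_pi hθ.1 hθ.2).le
    positivity

theorem lintegral_uniformSphere_abs_inner_sub {m : ℕ} (u : EuclideanSpace ℝ (Fin (m + 2)))
    {a : ℝ} (ha0 : 0 ≤ a) (ha1 : a ≤ 1) :
    ∫⁻ w, ENNReal.ofReal (|⟪(w : EuclideanSpace ℝ (Fin (m + 2))), u⟫| - ‖u‖ * a)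
        ∂uniformSphere (m + 2) =
      ENNReal.ofReal (‖u‖ *
        ((1 - a ^ 2) ^ (((m : ℝ) + 1) / 2) /
            ((((m : ℝ) + 1) / 2) * realBeta (((m : ℝ) + 1) / 2) (1 / 2)) -
          a * regIncBeta (1 - a ^ 2) (((m : ℝ) + 1) / 2) (1 / 2))) := by
  rcases eq_or_ne u 0 with rfl | hu
  · simp
  have hunit : ‖‖u‖⁻¹ • u‖ = 1 := norm_smul_inv_norm (𝕜 := ℝ) hu
  have hB : 0 < realBeta (((m : ℝ) + 1) / 2) (1 / 2) := realBeta_pos (by positivity) (by positivity)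
  have hscale (w : sphere (0 : EuclideanSpace ℝ (Fin (m + 2))) 1) :
      ENNReal.ofReal (|⟪w.1, u⟫| - ‖u‖ * a) =
        ENNReal.ofReal ‖u‖ * ENNReal.ofReal (|⟪‖u‖⁻¹ • u, w.1⟫| - a) := by
    rw [← ENNReal.ofReal_mul (norm_nonneg u), real_inner_smul_left, real_inner_comm, abs_mul,
      abs_inv, abs_norm, mul_sub, mul_inv_cancel_left₀ (norm_ne_zero_iff.2 hu)]
  simp only [hscale]
  rw [lintegral_const_mul _ (by fun_prop),
    lintegral_uniformSphere_comp_inner hunit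
      (f := fun t => ENNReal.ofReal (|t| - a)) (by fun_prop),
    lintegral_sin_pow_mul_abs_cos_sub m ha0 ha1, ← ENNReal.ofReal_mul (by positivity),
    ← ENNReal.ofReal_mul (norm_nonneg u), regIncBeta]
  congr 2
  field_simp

section Separation

theorem forall_mem_ball_lt_inner_iff {E : Type*} [NormedAddCommGroup E] [InnerProductSpace ℝ E]
    {w : E} (hw : ‖w‖ = 1) (c : E) (b : ℝ) {r : ℝ} (hr : 0 < r) :
    (∀ u ∈ ball c r, b < ⟪w, u⟫) ↔ b ≤ ⟪w, c⟫ - r := by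
  constructor
  · intro h
    by_contra! hlt
    obtain ⟨t, ht, htr⟩ := exists_between (max_lt (show ⟪w, c⟫ - b < r by linarith) hr)
    have ht0 : 0 ≤ t := (le_max_right _ _).trans ht.le
    have hmem : c - t • w ∈ ball c r := by
      simpa [mem_ball, dist_eq_norm, norm_smul, hw, abs_of_nonneg ht0] using htr
    have hval : ⟪w, c - t • w⟫ = ⟪w, c⟫ - t := by
      simp [inner_sub_right, inner_smul_right, hw]
    linarith [h _ hmem, (le_max_left (⟪w, c⟫ - b) 0).trans_lt ht]
  · intro h u hu
    have hCS := abs_real_inner_le_norm w (u - c)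
    rw [hw, one_mul, inner_sub_right] at hCS
    linarith [(abs_le.1 hCS).1, mem_ball_iff_norm.1 hu]

theorem forall_mem_ball_inner_lt_iff {E : Type*} [NormedAddCommGroup E] [InnerProductSpace ℝ E]
    {w : E} (hw : ‖w‖ = 1) (c : E) (b : ℝ) {r : ℝ} (hr : 0 < r) :
    (∀ u ∈ ball c r, ⟪w, u⟫ < b) ↔ ⟪w, c⟫ + r ≤ b := by
  have h := forall_mem_ball_lt_inner_iff (w := -w) (by rwa [norm_neg]) c (-b) hr
  simp only [inner_neg_left, neg_lt_neg_iff] at h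
  rw [h, ← neg_add', neg_le_neg_iff]

variable {n : ℕ} (c x : EuclideanSpace ℝ (Fin n)) {r p : ℝ}

theorem separates_iff {w : EuclideanSpace ℝ (Fin n)} (hw : ‖w‖ = 1) (b : ℝ) (hr : 0 < r)
    (hp : 0 < p) :
    Separates w b c r x p ↔
      b ∈ Set.Icc (⟪w, x⟫ + p) (⟪w, c⟫ - r) ∪ Set.Icc (⟪w, c⟫ + r) (⟪w, x⟫ - p) := by
  simp only [Separates, sub_pos, sub_neg, forall_mem_ball_lt_inner_iff hw _ _ hr,
    forall_mem_ball_lt_inner_iff hw _ _ hp, forall_mem_ball_inner_lt_iff hw _ _ hr,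
    forall_mem_ball_inner_lt_iff hw _ _ hp, Set.mem_union, Set.mem_Icc]
  tauto

theorem measurableSet_separates (hr : 0 < r) (hp : 0 < p) :
    MeasurableSet {q : sphere (0 : EuclideanSpace ℝ (Fin n)) 1 × ℝ |
      Separates (q.1 : EuclideanSpace ℝ (Fin n)) q.2 c r x p} := by
  simp only [separates_iff c x (norm_eq_of_mem_sphere _) _ hr hp, Set.mem_union, Set.mem_Icc]
  measurability

theorem volume_restrict_Icc_separates {w : EuclideanSpace ℝ (Fin n)} (hw : ‖w‖ = 1) {k : ℝ}
    (hr : 0 < r) (hp : 0 < p) (hc : ‖c‖ ≤ k) (hx : ‖x‖ ≤ k) :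
    volume.restrict (Set.Icc (-k) k) {b : ℝ | Separates w b c r x p} =
      ENNReal.ofReal (|⟪w, c - x⟫| - (p + r)) := by
  have hproj {y : EuclideanSpace ℝ (Fin n)} (hy : ‖y‖ ≤ k) : -k ≤ ⟪w, y⟫ ∧ ⟪w, y⟫ ≤ k :=
    abs_le.1 <| (abs_real_inner_le_norm w y).trans (by rwa [hw, one_mul])
  have hsub : Set.Icc (⟪w, x⟫ + p) (⟪w, c⟫ - r) ∪ Set.Icc (⟪w, c⟫ + r) (⟪w, x⟫ - p) ⊆
      Set.Icc (-k) k :=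
    Set.union_subset
      (Set.Icc_subset_Icc (by linarith [(hproj hx).1]) (by linarith [(hproj hc).2]))
      (Set.Icc_subset_Icc (by linarith [(hproj hc).1]) (by linarith [(hproj hx).2]))
  simp only [separates_iff c x hw _ hr hp, Set.ofPred_mem_eq]
  rw [Measure.restrict_apply (measurableSet_Icc.union measurableSet_Icc), Set.inter_eq_left.2 hsub,
    inner_sub_right]
  rcases le_total 0 (⟪w, c⟫ - ⟪w, x⟫) with h | h
  · rw [abs_of_nonneg h, Set.Icc_eq_empty (a := ⟪w, c⟫ + r) (by linarith), Set.union_empty,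
      volume_Icc]
    congr 1
    ring
  · rw [abs_of_nonpos h, Set.Icc_eq_empty (a := ⟪w, x⟫ + p) (by linarith), Set.empty_union,
      volume_Icc]
    congr 1
    ring

theorem prod_volume_restrict_Icc_separates
    (ν : Measure (sphere (0 : EuclideanSpace ℝ (Fin n)) 1)) {k : ℝ}
    (hr : 0 < r) (hp : 0 < p) (hc : ‖c‖ ≤ k) (hx : ‖x‖ ≤ k) :
    ν.prod (volume.restrict (Set.Icc (-k) k)) {q : sphere (0 : EuclideanSpace ℝ (Fin n)) 1 × ℝ |
        Separates (q.1 : EuclideanSpace ℝ (Fin n)) q.2 c r x p} =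
      ∫⁻ w, ENNReal.ofReal (|⟪(w : EuclideanSpace ℝ (Fin n)), c - x⟫| - (p + r)) ∂ν := by
  rw [Measure.prod_apply (measurableSet_separates c x hr hp)]
  exact lintegral_congr fun w =>
    volume_restrict_Icc_separates c x (norm_eq_of_mem_sphere w) hr hp hc hx

end Separation

theorem stmt10 (n : ℕ) (hn : 2 ≤ n) (c x : EuclideanSpace ℝ (Fin n)) (r p δ k : ℝ)
    (hr : 0 < r) (hp : 0 < p) (hδ : 0 < δ) (hdist : ‖c - x‖ = p + r + δ)
    (hk : max ‖c‖ ‖x‖ ≤ k) (hk0 : 0 < max ‖c‖ ‖x‖)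
    (Q : ℝ) (hQ : Q = 1 - ((p + r) / (p + r + δ)) ^ 2)
    (μb : Measure ℝ)
    (hμb : μb = (ENNReal.ofReal (2 * k))⁻¹ • volume.restrict (Set.Icc (-k) k)) :
    (uniformSphere n).prod μb
        {q : Metric.sphere (0 : EuclideanSpace ℝ (Fin n)) 1 × ℝ |
          Separates (q.1 : EuclideanSpace ℝ (Fin n)) q.2 c r x p} =
      ENNReal.ofReal ((‖c - x‖ / (2 * k)) *
        (Q ^ (((n : ℝ) - 1) / 2) /
            ((((n : ℝ) - 1) / 2) * realBeta (((n : ℝ) - 1) / 2) (1 / 2)) -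
          ((p + r) / (p + r + δ)) * regIncBeta Q (((n : ℝ) - 1) / 2) (1 / 2))) := by
  obtain ⟨m, rfl⟩ := Nat.exists_eq_add_of_le' hn
  have hL : 0 < p + r + δ := by positivity
  have hk_pos : 0 < k := hk0.trans_le hk
  have ha1 : (p + r) / (p + r + δ) ≤ 1 := (div_le_one hL).2 (by linarith)
  have hgap : p + r = ‖c - x‖ * ((p + r) / (p + r + δ)) := by rw [hdist]; field_simp
  have hdim : ((m + 2 : ℕ) : ℝ) - 1 = m + 1 := by push_cast; ring
  have havg := lintegral_uniformSphere_abs_inner_sub (c - x) (by positivity) ha1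
  rw [← hgap, ← hQ] at havg
  rw [hμb, Measure.prod_smul_right, Measure.smul_apply,
    prod_volume_restrict_Icc_separates c x _ hr hp (le_of_max_le_left hk) (le_of_max_le_right hk),
    havg, smul_eq_mul, ← ENNReal.ofReal_inv_of_pos (by positivity),
    ← ENNReal.ofReal_mul (by positivity), hdim]
  congr 1
  ring
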